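/- Amplifying a hierarchical constellation does not decrease any conditional per-bit low-priority mutual information at a fixed high-priority label: for every ρ ≥ 1, every noise variance σ² > 0, every index 1 ≤ j ≤ m_L, and every b_H ∈ {0,1}^{m_H}, one has I(B_L^j ; ρZ + N | B_H = b_H) ≥ I(B_L^j ; Z + N | B_H = b_H), where the mutual informations are computed under the conditional probability measure given B_H = b_H and N is a complex Gaussian noise of variance σ² independent of the labels. -/

import Mathlib

open MeasureTheory ProbabilityTheory
open scoped ENNReal NNReal

/-- The centered complex Gaussian law of variance `v`: real and imaginary parts are independent
centered real Gaussians of variance `v/2`. -/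
noncomputable def complexGaussian (v : ℝ≥0) : Measure ℂ :=
  ((gaussianReal 0 (v / 2)).prod (gaussianReal 0 (v / 2))).map
    (fun p => (p.1 : ℂ) + (p.2 : ℂ) * Complex.I)

/-- Kullback-Leibler divergence in base 2 (in bits). -/
noncomputable def klDiv2 {α : Type*} [MeasurableSpace α] (μ ν : Measure α) : ℝ :=
  ∫ x, Real.logb 2 ((μ.rnDeriv ν x).toReal) ∂μ

/-- Mutual information (base 2) of two random variables: KL divergence of the joint law from
the product of the marginal laws. -/
noncomputable def mutualInfo {Ω α β : Type*} [MeasurableSpace Ω] [MeasurableSpace α]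
    [MeasurableSpace β] (P : Measure Ω) (X : Ω → α) (Y : Ω → β) : ℝ :=
  klDiv2 (P.map fun ω => (X ω, Y ω)) ((P.map X).prod (P.map Y))

/-- Conditional mutual information given a finite-valued random variable `B`:
`I(X;Y|B) = ∑ b, P(B = b) · I(X;Y)` computed under the conditional measure `P[|B = b]`. -/
noncomputable def condMutualInfo {Ω α β γ : Type*} [MeasurableSpace Ω] [MeasurableSpace α]
    [MeasurableSpace β] [MeasurableSpace γ] [Fintype γ] (P : Measure Ω) (X : Ω → α) (Y : Ω → β)
    (B : Ω → γ) : ℝ :=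
  ∑ b : γ, (P (B ⁻¹' {b})).toReal * mutualInfo (P[|B ⁻¹' {b}]) X Y

/-!
Write `c = ρ⁻¹`, so `‖c‖ ≤ 1`. A complex Gaussian `N` of variance `σ²` has the same law as
`c * N + W`, with `W` an independent complex Gaussian of variance `(1 - ‖c‖²) σ²`. So `Z + N` is in
law `Z + c * N` with some extra independent noise, while `Z + c * N` is the invertible rescaling
`c * (ρ * Z + N)`. The data processing inequality gives
`I(X ; Z + N) ≤ I(X ; Z + c * N) ≤ I(X ; ρ * Z + N)`, and conditioning on an event of the labels
affects neither the law of the noise nor its independence from the labels.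
-/

section MutualInformation

open InformationTheory

variable {Ω α β γ : Type*} [MeasurableSpace Ω] [MeasurableSpace α] [MeasurableSpace β]
  [MeasurableSpace γ]

lemma klDiv2_eq_toReal_klDiv_div_log {μ ν : Measure α} [IsFiniteMeasure μ] [IsFiniteMeasure ν]
    (hμν : μ ≪ ν) (h_univ : μ Set.univ = ν Set.univ) :
    klDiv2 μ ν = (klDiv μ ν).toReal / Real.log 2 := by
  rw [toReal_klDiv_of_measure_eq hμν h_univ, ← integral_div]
  rfl

lemma map_diag_absolutelyContinuous_prod [Countable α] [MeasurableSingletonClass α]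
    (μ : Measure α) [SFinite μ] : μ.map Function.diag ≪ μ.prod μ := by
  intro s hs
  rw [Measure.map_apply measurable_diag s.to_countable.measurableSet,
    measure_null_iff_singleton (Set.to_countable _)]
  intro x hx
  have h_sq : μ {x} * μ {x} = 0 := by
    rw [← Measure.prod_prod, Set.singleton_prod_singleton]
    exact measure_mono_null (Set.singleton_subset_iff.2 hx) hs
  exact mul_self_eq_zero.1 h_sq

lemma snd_id_parallelComp_comp (π : Measure (α × β)) (κ : Kernel β γ) [IsSFiniteKernel κ] :
    ((Kernel.id ∥ₖ κ) ∘ₘ π).snd = κ ∘ₘ π.snd := by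
  have h_snd : (Kernel.id ∥ₖ κ : Kernel (α × β) (α × γ)).map Prod.snd =
      κ ∘ₖ Kernel.deterministic Prod.snd measurable_snd := by
    ext1 ⟨x, y⟩
    rw [Kernel.map_apply _ measurable_snd, Kernel.parallelComp_apply, Kernel.id_apply,
      Kernel.comp_deterministic_eq_comap, Kernel.comap_apply, ← Measure.snd, Measure.snd_prod]
  rw [Measure.snd, Measure.map_comp _ _ measurable_snd, h_snd, ← Measure.comp_assoc,
    Measure.deterministic_comp_eq_map, Measure.snd]

variable {Q : Measure Ω} [IsProbabilityMeasure Q] {X : Ω → α} {Y : Ω → β} {Y' : Ω → γ}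

lemma klDiv_map_prodMk_le_of_degraded (hX : Measurable X) (κ : Kernel β γ) [IsMarkovKernel κ]
    (h : Q.map (fun ω ↦ (X ω, Y' ω)) = (Kernel.id ∥ₖ κ) ∘ₘ Q.map (fun ω ↦ (X ω, Y ω))) :
    klDiv (Q.map fun ω ↦ (X ω, Y' ω)) ((Q.map X).prod (Q.map Y')) ≤
      klDiv (Q.map fun ω ↦ (X ω, Y ω)) ((Q.map X).prod (Q.map Y)) := by
  have h_marginal : Q.map Y' = κ ∘ₘ Q.map Y := by
    have h_snd := congrArg Measure.snd h
    rwa [Measure.snd_map_prodMk hX, snd_id_parallelComp_comp, Measure.snd_map_prodMk hX] at h_snd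
  rw [h, h_marginal, Measure.prod_comp_right]
  exact klDiv_comp_right_le _ _ _

lemma klDiv_map_prodMk_ne_top [Finite α] [MeasurableSingletonClass α] [StandardBorelSpace β]
    (hX : Measurable X) (hY : Measurable Y) :
    klDiv (Q.map fun ω ↦ (X ω, Y ω)) ((Q.map X).prod (Q.map Y)) ≠ ∞ := by
  have : Nonempty β := ⟨Y (nonempty_of_isProbabilityMeasure Q).some⟩
  have h_diag : Q.map (fun ω ↦ (X ω, X ω)) = (Q.map X).map Function.diag :=
    (Measure.map_map measurable_diag hX).symm
  -- `Y` is the output of the channel `condDistrib Y X Q` fed with `X`, so `I(X ; Y) ≤ I(X ; X)`.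
  have h_degraded : Q.map (fun ω ↦ (X ω, Y ω)) =
      (Kernel.id ∥ₖ condDistrib Y X Q) ∘ₘ Q.map (fun ω ↦ (X ω, X ω)) := by
    rw [h_diag, ← Measure.compProd_id, Measure.parallelComp_comp_compProd, Kernel.comp_id,
      compProd_map_condDistrib hY.aemeasurable]
  refine ne_top_of_le_ne_top ?_ (klDiv_map_prodMk_le_of_degraded hX _ h_degraded)
  rw [h_diag]
  exact klDiv_ne_top (map_diag_absolutelyContinuous_prod _) .of_finite

lemma mutualInfo_eq_toReal_klDiv_div_log (hX : Measurable X) (hY : Measurable Y)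
    (h : klDiv (Q.map fun ω ↦ (X ω, Y ω)) ((Q.map X).prod (Q.map Y)) ≠ ∞) :
    mutualInfo Q X Y =
      (klDiv (Q.map fun ω ↦ (X ω, Y ω)) ((Q.map X).prod (Q.map Y))).toReal / Real.log 2 := by
  have := Measure.isProbabilityMeasure_map (μ := Q) hX.aemeasurable
  have := Measure.isProbabilityMeasure_map (μ := Q) hY.aemeasurable
  have := Measure.isProbabilityMeasure_map (μ := Q) (hX.prodMk hY).aemeasurable
  exact klDiv2_eq_toReal_klDiv_div_log (klDiv_ne_top_iff.1 h).1 (by simp)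

variable [Finite α] [MeasurableSingletonClass α] [StandardBorelSpace β]

theorem mutualInfo_le_of_degraded (hX : Measurable X) (hY : Measurable Y)
    (hY' : Measurable Y') (κ : Kernel β γ) [IsMarkovKernel κ]
    (h : Q.map (fun ω ↦ (X ω, Y' ω)) = (Kernel.id ∥ₖ κ) ∘ₘ Q.map (fun ω ↦ (X ω, Y ω))) :
    mutualInfo Q X Y' ≤ mutualInfo Q X Y := by
  have h_le := klDiv_map_prodMk_le_of_degraded hX κ h
  have h_fin := klDiv_map_prodMk_ne_top (Q := Q) hX hY
  rw [mutualInfo_eq_toReal_klDiv_div_log hX hY h_fin,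
    mutualInfo_eq_toReal_klDiv_div_log hX hY' (ne_top_of_le_ne_top h_fin h_le)]
  gcongr

lemma mutualInfo_comp_le (hX : Measurable X) (hY : Measurable Y) {f : β → γ}
    (hf : Measurable f) : mutualInfo Q X (fun ω ↦ f (Y ω)) ≤ mutualInfo Q X Y := by
  refine mutualInfo_le_of_degraded hX hY (hf.comp hY) (Kernel.deterministic f hf) ?_
  rw [Kernel.id, Kernel.deterministic_parallelComp_deterministic,
    Measure.deterministic_comp_eq_map, Measure.map_map (by fun_prop) (by fun_prop)]
  rfl

end MutualInformation

section AdditiveNoise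

variable {E : Type*} [AddMonoid E] [MeasurableSpace E] [MeasurableAdd₂ E]

/-- The channel that sends an input `z` to the law of `z + N`, where the noise `N` has law `ν`. -/
noncomputable def additiveNoise (ν : Measure E) : Kernel E E :=
  (Kernel.id ×ₖ Kernel.const E ν).map fun p ↦ p.1 + p.2

lemma additiveNoise_apply (ν : Measure E) [SFinite ν] (z : E) :
    additiveNoise ν z = Measure.dirac z ∗ ν := by
  rw [additiveNoise, Kernel.map_apply _ (by fun_prop), Kernel.prod_apply, Kernel.id_apply,
    Kernel.const_apply, Measure.conv]

instance (ν : Measure E) [IsProbabilityMeasure ν] : IsMarkovKernel (additiveNoise ν) :=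
  Kernel.IsMarkovKernel.map _ (by fun_prop)

lemma additiveNoise_comp (μ ν : Measure E) [SFinite μ] [SFinite ν] :
    additiveNoise ν ∘ₘ μ = μ ∗ ν := by
  rw [additiveNoise, ← Measure.map_comp _ _ (by fun_prop), ← Measure.compProd_eq_comp_prod,
    Measure.compProd_const, Measure.conv]

lemma additiveNoise_comp_additiveNoise (ν η : Measure E) [SFinite ν] [SFinite η] :
    additiveNoise η ∘ₖ additiveNoise ν = additiveNoise (ν ∗ η) := by
  ext1 z
  rw [Kernel.comp_apply, additiveNoise_apply, additiveNoise_comp, additiveNoise_apply,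
    Measure.conv_assoc]

variable {Ω α : Type*} [MeasurableSpace Ω] [MeasurableSpace α]

lemma id_parallelComp_additiveNoise (ν : Measure E) [IsProbabilityMeasure ν] :
    (Kernel.id : Kernel α α) ∥ₖ additiveNoise ν =
      (Kernel.id ×ₖ Kernel.const (α × E) ν).map fun p ↦ (p.1.1, p.1.2 + p.2) := by
  ext1 ⟨x, z⟩
  rw [Kernel.parallelComp_apply, additiveNoise_apply, Kernel.map_apply _ (by fun_prop),
    Kernel.prod_apply, Kernel.id_apply, Kernel.id_apply, Kernel.const_apply, Measure.conv,
    Measure.dirac_prod, Measure.dirac_prod, Measure.dirac_prod,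
    Measure.map_map (by fun_prop) (by fun_prop), Measure.map_map (by fun_prop) (by fun_prop),
    Measure.map_map (by fun_prop) (by fun_prop)]
  rfl

variable {Q : Measure Ω} [IsProbabilityMeasure Q] {X : Ω → α} {Z N N' : Ω → E}

lemma map_prodMk_add_eq_additiveNoise_comp (hX : Measurable X) (hZ : Measurable Z)
    (hN : Measurable N) (h_indep : IndepFun (fun ω ↦ (X ω, Z ω)) N Q) :
    Q.map (fun ω ↦ (X ω, Z ω + N ω)) =
      (Kernel.id ∥ₖ additiveNoise (Q.map N)) ∘ₘ Q.map (fun ω ↦ (X ω, Z ω)) := by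
  have := Measure.isProbabilityMeasure_map (μ := Q) hN.aemeasurable
  have h_joint := (indepFun_iff_map_prod_eq_prod_map_map (hX.prodMk hZ).aemeasurable
    hN.aemeasurable).1 h_indep
  rw [id_parallelComp_additiveNoise, ← Measure.map_comp _ _ (by fun_prop),
    ← Measure.compProd_eq_comp_prod, Measure.compProd_const, ← h_joint,
    Measure.map_map (by fun_prop) (by fun_prop)]
  rfl

theorem mutualInfo_add_le_of_map_eq_conv [Finite α] [MeasurableSingletonClass α]
    [StandardBorelSpace E] (hX : Measurable X) (hZ : Measurable Z) (hN : Measurable N)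
    (hN' : Measurable N') (h_indep : IndepFun (fun ω ↦ (X ω, Z ω)) N Q)
    (h_indep' : IndepFun (fun ω ↦ (X ω, Z ω)) N' Q) (η : Measure E) [IsProbabilityMeasure η]
    (h_law : Q.map N' = Q.map N ∗ η) :
    mutualInfo Q X (fun ω ↦ Z ω + N' ω) ≤ mutualInfo Q X (fun ω ↦ Z ω + N ω) := by
  have := Measure.isProbabilityMeasure_map (μ := Q) hN.aemeasurable
  refine mutualInfo_le_of_degraded hX (hZ.add hN) (hZ.add hN') (additiveNoise η) ?_
  rw [map_prodMk_add_eq_additiveNoise_comp hX hZ hN' h_indep',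
    map_prodMk_add_eq_additiveNoise_comp hX hZ hN h_indep, h_law,
    ← additiveNoise_comp_additiveNoise, Measure.comp_assoc,
    Kernel.parallelComp_id_left_comp_parallelComp]

end AdditiveNoise

section ComplexGaussian

instance (v : ℝ≥0) : IsProbabilityMeasure (complexGaussian v) :=
  Measure.isProbabilityMeasure_map (by fun_prop)

lemma charFun_complexGaussian (v : ℝ≥0) (t : ℂ) :
    charFun (complexGaussian v) t = Complex.exp (-(v * ‖t‖ ^ 2 / 4)) := by
  have h_inner (p : ℝ × ℝ) :
      inner ℝ (p.1 + p.2 * Complex.I : ℂ) t = t.re * p.1 + t.im * p.2 := by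
    simp [Complex.inner, mul_comm]
  have h_norm : (‖t‖ ^ 2 : ℂ) = t.re ^ 2 + t.im ^ 2 := by
    rw [← Complex.ofReal_pow, Complex.sq_norm, Complex.normSq_apply]
    push_cast
    ring
  rw [charFun_apply, complexGaussian, integral_map (by fun_prop) (by fun_prop)]
  simp only [h_inner, Complex.ofReal_add, Complex.ofReal_mul, add_mul, Complex.exp_add]
  rw [integral_prod_mul (fun x : ℝ ↦ Complex.exp (t.re * x * Complex.I))
    (fun y : ℝ ↦ Complex.exp (t.im * y * Complex.I)), ← charFun_apply_real, ← charFun_apply_real,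
    charFun_gaussianReal, charFun_gaussianReal, ← Complex.exp_add, h_norm]
  congr 1
  push_cast
  ring

lemma charFun_map_const_mul (μ : Measure ℂ) (c t : ℂ) :
    charFun (μ.map (c * ·)) t = charFun μ (starRingEnd ℂ c * t) := by
  rw [charFun_apply, charFun_apply, integral_map (by fun_prop) (by fun_prop)]
  simp only [Complex.inner, map_mul, mul_assoc, mul_left_comm]

theorem complexGaussian_eq_map_const_mul_conv {v w : ℝ≥0} {c : ℂ}
    (h : (v : ℝ) = ‖c‖ ^ 2 * v + w) :
    complexGaussian v = (complexGaussian v).map (c * ·) ∗ complexGaussian w := by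
  have := Measure.isProbabilityMeasure_map (μ := complexGaussian v)
    (measurable_const_mul c).aemeasurable
  refine Measure.ext_of_charFun (funext fun t ↦ ?_)
  rw [charFun_conv, charFun_map_const_mul, charFun_complexGaussian, charFun_complexGaussian,
    charFun_complexGaussian, ← Complex.exp_add, norm_mul, RCLike.norm_conj]
  have h' : (v : ℂ) = ‖c‖ ^ 2 * v + w := by exact_mod_cast h
  congr 1
  push_cast
  linear_combination (-‖t‖ ^ 2 / 4 : ℂ) * h'

end ComplexGaussian

section Amplification

variable {Ω α : Type*} [MeasurableSpace Ω] [MeasurableSpace α] [Finite α]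
  [MeasurableSingletonClass α] {Q : Measure Ω} [IsProbabilityMeasure Q] {X : Ω → α} {Z N : Ω → ℂ}

theorem mutualInfo_add_le_mutualInfo_const_mul_add (hX : Measurable X) (hZ : Measurable Z)
    (hN : Measurable N) (h_indep : IndepFun (fun ω ↦ (X ω, Z ω)) N Q) {v : ℝ≥0}
    (h_law : Q.map N = complexGaussian v) {ρ : ℂ} (hρ : 1 ≤ ‖ρ‖) :
    mutualInfo Q X (fun ω ↦ Z ω + N ω) ≤ mutualInfo Q X (fun ω ↦ ρ * Z ω + N ω) := by
  have hρ₀ : ρ ≠ 0 := norm_pos_iff.1 (one_pos.trans_le hρ)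
  obtain ⟨w, hw⟩ : ∃ w : ℝ≥0, (v : ℝ) = ‖ρ⁻¹‖ ^ 2 * v + w := by
    have h_sq : ‖ρ⁻¹‖ ^ 2 ≤ 1 := by
      rw [norm_inv]
      exact pow_le_one₀ (by positivity) (inv_le_one_of_one_le₀ hρ)
    refine ⟨⟨v - ‖ρ⁻¹‖ ^ 2 * v, sub_nonneg.2 (mul_le_of_le_one_left v.2 h_sq)⟩, ?_⟩
    exact (add_sub_cancel _ _).symm
  calc mutualInfo Q X (fun ω ↦ Z ω + N ω)
    _ ≤ mutualInfo Q X (fun ω ↦ Z ω + ρ⁻¹ * N ω) := by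
      refine mutualInfo_add_le_of_map_eq_conv hX hZ (hN.const_mul _) hN
        (h_indep.comp measurable_id (measurable_const_mul ρ⁻¹)) h_indep (complexGaussian w) ?_
      have h_scaled : Q.map (fun ω ↦ ρ⁻¹ * N ω) = (complexGaussian v).map (ρ⁻¹ * ·) := by
        rw [← h_law, Measure.map_map (measurable_const_mul ρ⁻¹) hN]
        rfl
      rw [h_law, h_scaled]
      exact complexGaussian_eq_map_const_mul_conv hw
    _ = mutualInfo Q X (fun ω ↦ ρ⁻¹ * (ρ * Z ω + N ω)) := by
      simp only [mul_add, inv_mul_cancel_left₀ hρ₀]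
    _ ≤ mutualInfo Q X (fun ω ↦ ρ * Z ω + N ω) :=
      mutualInfo_comp_le hX ((hZ.const_mul ρ).add hN) (measurable_const_mul ρ⁻¹)

end Amplification

section Conditioning

variable {Ω β γ : Type*} [MeasurableSpace Ω] [MeasurableSpace β] [MeasurableSpace γ]
  {P : Measure Ω} {B : Ω → β} {N : Ω → γ} {s : Set β}

lemma measure_preimage_ne_zero_of_map_eq_uniform [Fintype β] [Nonempty β]
    [MeasurableSingletonClass β] (hB : Measurable B)
    (h_unif : P.map B = (PMF.uniformOfFintype β).toMeasure) (hs : s.Nonempty) :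
    P (B ⁻¹' s) ≠ 0 := by
  have hs_meas : MeasurableSet s := s.to_countable.measurableSet
  rw [← Measure.map_apply hB hs_meas, h_unif, Ne, PMF.toMeasure_apply_eq_zero_iff _ hs_meas,
    PMF.support_uniformOfFintype, Set.top_eq_univ, Set.univ_disjoint]
  exact hs.ne_empty

variable [IsProbabilityMeasure P]

lemma map_cond_preimage_of_indepFun (h_indep : IndepFun B N P) (hB : Measurable B)
    (hN : Measurable N) (hs : MeasurableSet s) (hPs : P (B ⁻¹' s) ≠ 0) :
    (P[|B ⁻¹' s]).map N = P.map N := by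
  ext t ht
  rw [Measure.map_apply hN ht, Measure.map_apply hN ht, cond_apply (hB hs),
    h_indep.measure_inter_preimage_eq_mul s t hs ht, ← mul_assoc,
    ENNReal.inv_mul_cancel hPs (measure_ne_top P _), one_mul]

lemma indepFun_cond_preimage (h_indep : IndepFun B N P) (hB : Measurable B)
    (hN : Measurable N) (hs : MeasurableSet s) (hPs : P (B ⁻¹' s) ≠ 0) :
    IndepFun B N (P[|B ⁻¹' s]) := by
  refine indepFun_iff_measure_inter_preimage_eq_mul.2 fun u t hu ht ↦ ?_
  have h_law : P[|B ⁻¹' s] (N ⁻¹' t) = P (N ⁻¹' t) := by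
    rw [← Measure.map_apply hN ht, map_cond_preimage_of_indepFun h_indep hB hN hs hPs,
      Measure.map_apply hN ht]
  rw [h_law, cond_apply (hB hs), cond_apply (hB hs), ← Set.inter_assoc, ← Set.preimage_inter,
    h_indep.measure_inter_preimage_eq_mul (s ∩ u) t (hs.inter hu) ht, mul_assoc]

end Conditioning

theorem hm_amplify_LP_bit_MI_cond_general
    {Ω β α : Type*} [MeasurableSpace Ω] [MeasurableSpace β] [MeasurableSpace α] [Finite α]
    [MeasurableSingletonClass α] (P : Measure Ω) [IsProbabilityMeasure P]
    (μc : β → ℂ) (hμc : Measurable μc) (f : β → α) (hf : Measurable f)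
    (B : Ω → β) (hB : Measurable B) (s : Set β) (hs : MeasurableSet s) (hPs : P (B ⁻¹' s) ≠ 0)
    (σ2 : ℝ≥0) (N : Ω → ℂ) (hN : Measurable N) (lawN : P.map N = complexGaussian σ2)
    (hIndepN : IndepFun B N P) (ρ : ℂ) (hρ : 1 ≤ ‖ρ‖) :
    mutualInfo (P[|B ⁻¹' s]) (fun ω ↦ f (B ω)) (fun ω ↦ μc (B ω) + N ω) ≤
      mutualInfo (P[|B ⁻¹' s]) (fun ω ↦ f (B ω)) (fun ω ↦ ρ * μc (B ω) + N ω) := by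
  have := cond_isProbabilityMeasure hPs
  have h_indep : IndepFun (fun ω ↦ (f (B ω), μc (B ω))) N (P[|B ⁻¹' s]) :=
    (indepFun_cond_preimage hIndepN hB hN hs hPs).comp (hf.prodMk hμc) measurable_id
  have h_law : (P[|B ⁻¹' s]).map N = complexGaussian σ2 :=
    (map_cond_preimage_of_indepFun hIndepN hB hN hs hPs).trans lawN
  exact mutualInfo_add_le_mutualInfo_const_mul_add (hf.comp hB) (hμc.comp hB) hN h_indep h_law hρ

/-!
STATEMENT 4: Amplifying a hierarchical constellation does not decrease any conditional per-bit
low-priority mutual information at a fixed high-priority label: for every `ρ ≥ 1`, `σ² > 0`,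
index `j` and `b_H`, `I(B_L^j ; ρZ + N | B_H = b_H) ≥ I(B_L^j ; Z + N | B_H = b_H)`, computed
under the conditional measure given `B_H = b_H`, with `N` complex Gaussian of variance `σ²`
independent of the labels.
-/
theorem hm_amplify_LP_bit_MI_cond
    {Ω : Type*} [MeasurableSpace Ω] (P : Measure Ω) [IsProbabilityMeasure P]
    (mH mL : ℕ) (hmH : 0 < mH) (hmL : 0 < mL)
    (μc : (Fin mH → Bool) × (Fin mL → Bool) → ℂ)
    (BH : Ω → Fin mH → Bool) (BL : Ω → Fin mL → Bool)
    (hBH : Measurable BH) (hBL : Measurable BL)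
    (hUnif : P.map (fun ω => (BH ω, BL ω)) =
      (PMF.uniformOfFintype ((Fin mH → Bool) × (Fin mL → Bool))).toMeasure)
    (σ2 : ℝ≥0) (hσ2 : 0 < σ2)
    (N : Ω → ℂ) (hNMeas : Measurable N)
    (lawN : P.map N = complexGaussian σ2)
    (hIndepN : IndepFun (fun ω => (BH ω, BL ω)) N P)
    (ρ : ℝ) (hρ : 1 ≤ ρ) (j : Fin mL) (bH : Fin mH → Bool) :
    mutualInfo (P[|BH ⁻¹' {bH}]) (fun ω => BL ω j)
        (fun ω => (ρ : ℂ) * μc (BH ω, BL ω) + N ω) ≥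
      mutualInfo (P[|BH ⁻¹' {bH}]) (fun ω => BL ω j)
        (fun ω => μc (BH ω, BL ω) + N ω) := by
  have hB : Measurable fun ω ↦ (BH ω, BL ω) := hBH.prodMk hBL
  exact hm_amplify_LP_bit_MI_cond_general P μc (measurable_of_finite _) (fun b ↦ b.2 j)
    (measurable_of_finite _) _ hB (Prod.fst ⁻¹' {bH}) (measurable_fst (measurableSet_singleton bH))
    (measure_preimage_ne_zero_of_map_eq_uniform hB hUnif ⟨(bH, default), rfl⟩) σ2 N hNMeas lawN
    hIndepN ρ (by simpa using hρ.trans (le_abs_self ρ))
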